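/- For every real p ∈ [2,∞), let w_p ∈ (0,1) be the unique root of w^p + 1 = 2(1−w)^p and set s_p = (w_p^{p/(p−1)} + 1)^{−1/p}. Then s_p ∈ (2^{−1/p}, 1), and s_p is the unique critical point in (2^{−1/p}, 1) of the function f₁(s) = 1 + π_p/2 + ∫_{2^{−1/p}}^s (z^{p²−p}(1−z^p)^{1−p} + 1)^{1/p} dz + 2^{1/p}((1−s^p)^{1/p} + s); equivalently, s = s_p is the unique solution in (2^{−1/p},1) of (1 + s^{p(p−1)}(1−s^p)^{1−p})^{1/p} = 2^{1/p}(s^{p−1}(1−s^p)^{(1−p)/p} − 1). -/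

import Mathlib

open Real MeasureTheory intervalIntegral

/-- The ℓ_p norm of a point of ℝ². -/
noncomputable def lpN (p : ℝ) (z : ℝ × ℝ) : ℝ := (|z.1| ^ p + |z.2| ^ p) ^ (1 / p)

/-- The normalization factor `N_p(φ) = (|sin φ|^p + |cos φ|^p)^{1/p}`. -/
noncomputable def Np (p φ : ℝ) : ℝ := (|Real.sin φ| ^ p + |Real.cos φ| ^ p) ^ (1 / p)

/-- The parameterization `ρ_p(φ) = (cos φ, sin φ)/N_p(φ)` of the ℓ_p unit circle. -/
noncomputable def rho (p φ : ℝ) : ℝ × ℝ := (Real.cos φ / Np p φ, Real.sin φ / Np p φ)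

/-- The ℓ_p speed `‖ρ_p′(t)‖_p` of the parameterization `ρ_p`. -/
noncomputable def speed (p t : ℝ) : ℝ := lpN p (deriv (rho p) t)

/-- `π_p`, half the ℓ_p-circumference of the ℓ_p unit circle. -/
noncomputable def piP (p : ℝ) : ℝ := 2 * ∫ t in (0 : ℝ)..(Real.pi / 2), speed p t

/-!
Let `x` be the absolute slope of the `ℓ_p` unit circle at its point with abscissa `s`. Both the
arc-length integrand and the derivative of `(1 - s ^ p) ^ (1 / p)` depend on `s` only through `x`:
`f₁' s = (1 + x ^ p) ^ (1 / p) - 2 ^ (1 / p) * (x - 1)`. This can vanish only for `x > 1`, and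
dividing by `x` and raising to the power `p` shows that it does so exactly when `v = x⁻¹` is a root
of `v ^ p + 1 = 2 * (1 - v) ^ p`. That root is unique because the left side increases and the right
side decreases. Finally `x⁻¹ ^ (p / (p - 1)) = s ^ (-p) - 1` recovers `s` from `x⁻¹`.
-/

section Root

variable {p c w x : ℝ}

lemma strictMonoOn_rpow_add_one_sub (hp : 0 < p) (hc : 0 ≤ c) :
    StrictMonoOn (fun v : ℝ => v ^ p + 1 - c * (1 - v) ^ p) (Set.Icc 0 1) := by
  intro u hu v hv huv
  have h_left : u ^ p < v ^ p := rpow_lt_rpow hu.1 huv hp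
  have h_right : c * (1 - v) ^ p ≤ c * (1 - u) ^ p :=
    mul_le_mul_of_nonneg_left
      (rpow_le_rpow (sub_nonneg.2 hv.2) (sub_le_sub_left huv.le 1) hp.le) hc
  change u ^ p + 1 - c * (1 - u) ^ p < v ^ p + 1 - c * (1 - v) ^ p
  linarith

lemma one_add_rpow_rpow_eq_iff_inv_rpow_add_one_eq (hp : 0 < p) (hc : 0 ≤ c) (hx : 1 ≤ x) :
    (1 + x ^ p) ^ (1 / p) = c ^ (1 / p) * (x - 1) ↔ x⁻¹ ^ p + 1 = c * (1 - x⁻¹) ^ p := by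
  have hx0 : 0 < x := zero_lt_one.trans_le hx
  have hx1 : 0 ≤ x - 1 := sub_nonneg.2 hx
  have h_inv : 1 - x⁻¹ = (x - 1) / x := by field_simp
  calc
    (1 + x ^ p) ^ (1 / p) = c ^ (1 / p) * (x - 1) ↔ 1 + x ^ p = c * (x - 1) ^ p := by
      rw [one_div, rpow_inv_eq (by positivity) (by positivity) hp.ne',
        mul_rpow (by positivity) hx1, rpow_inv_rpow hc hp.ne']
    _ ↔ x⁻¹ ^ p + 1 = c * (1 - x⁻¹) ^ p := by
      rw [h_inv, div_rpow hx1 hx0.le, inv_rpow hx0.le]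
      field_simp

lemma one_add_rpow_rpow_eq_iff_inv_eq (hp : 0 < p) (hc : 0 ≤ c) (hx : 0 < x)
    (hw : w ∈ Set.Ioo (0 : ℝ) 1) (hroot : w ^ p + 1 = c * (1 - w) ^ p) :
    (1 + x ^ p) ^ (1 / p) = c ^ (1 / p) * (x - 1) ↔ x⁻¹ = w := by
  constructor
  · intro h
    have hx1 : 1 < x := by
      have h_pos : 0 < c ^ (1 / p) * (x - 1) := h ▸ by positivity
      exact sub_pos.1 (pos_of_mul_pos_right h_pos (by positivity))
    have h_inv_root := (one_add_rpow_rpow_eq_iff_inv_rpow_add_one_eq hp hc hx1.le).1 h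
    exact (strictMonoOn_rpow_add_one_sub hp hc).injOn
      ⟨by positivity, inv_le_one_of_one_le₀ hx1.le⟩ (Set.Ioo_subset_Icc_self hw)
      ((sub_eq_zero.2 h_inv_root).trans (sub_eq_zero.2 hroot).symm)
  · rintro rfl
    exact (one_add_rpow_rpow_eq_iff_inv_rpow_add_one_eq hp hc ((inv_lt_one₀ hx).1 hw.2).le).2 hroot

lemma rpow_add_one_rpow_neg_mem_Ioo {q r : ℝ} (hq : 0 < q) (hr : 0 < r)
    (hw : w ∈ Set.Ioo (0 : ℝ) 1) : (w ^ q + 1) ^ (-r) ∈ Set.Ioo ((2 : ℝ) ^ (-r)) 1 := by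
  have h_pos : 0 < w ^ q := rpow_pos_of_pos hw.1 q
  have h_lt : w ^ q < 1 := rpow_lt_one hw.1.le hw.2 hq
  exact ⟨rpow_lt_rpow_of_neg (by linarith) (by linarith) (neg_neg_of_pos hr),
    rpow_lt_one_of_one_lt_of_neg (by linarith) (neg_neg_of_pos hr)⟩

end Root

/-- The absolute value `s ^ (p - 1) * (1 - s ^ p) ^ ((1 - p) / p)` of the slope of the `ℓ_p` unit
circle `y = (1 - s ^ p) ^ (1 / p)`, meaningful for `0 < s < 1`. -/
noncomputable def lpSlope (p s : ℝ) : ℝ := s ^ (p - 1) * (1 - s ^ p) ^ ((1 - p) / p)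

section Slope

variable {p s : ℝ}

lemma one_sub_rpow_pos (hp : 0 < p) (hs : s ∈ Set.Ioo (0 : ℝ) 1) : 0 < 1 - s ^ p :=
  sub_pos.2 (rpow_lt_one hs.1.le hs.2 hp)

lemma lpSlope_pos (hp : 0 < p) (hs : s ∈ Set.Ioo (0 : ℝ) 1) : 0 < lpSlope p s :=
  mul_pos (rpow_pos_of_pos hs.1 _) (rpow_pos_of_pos (one_sub_rpow_pos hp hs) _)

lemma lpSlope_rpow_self (hp : 0 < p) (hs : s ∈ Set.Ioo (0 : ℝ) 1) :
    lpSlope p s ^ p = s ^ (p * (p - 1)) * (1 - s ^ p) ^ (1 - p) := by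
  have hs0 : 0 < s := hs.1
  have hy : 0 < 1 - s ^ p := one_sub_rpow_pos hp hs
  rw [lpSlope, mul_rpow (by positivity) (by positivity), ← rpow_mul hs0.le, ← rpow_mul hy.le,
    div_mul_cancel₀ _ hp.ne', mul_comm p]

lemma lpSlope_inv_rpow_conjExponent (hp : 1 < p) (hs : s ∈ Set.Ioo (0 : ℝ) 1) :
    (lpSlope p s)⁻¹ ^ (p / (p - 1)) = s ^ (-p) - 1 := by
  have hs0 : 0 < s := hs.1
  have hy : 0 < 1 - s ^ p := one_sub_rpow_pos (by linarith) hs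
  have hp1 : p - 1 ≠ 0 := by linarith
  have h_exp_s : -(p - 1) * (p / (p - 1)) = -p := by field_simp
  have h_exp_y : -((1 - p) / p) * (p / (p - 1)) = 1 := by field_simp; ring
  calc
    (lpSlope p s)⁻¹ ^ (p / (p - 1)) = s ^ (-p) * (1 - s ^ p) := by
      rw [lpSlope, mul_inv, ← rpow_neg hs0.le, ← rpow_neg hy.le,
        mul_rpow (by positivity) (by positivity), ← rpow_mul hs0.le, ← rpow_mul hy.le,
        h_exp_s, h_exp_y, rpow_one]
    _ = s ^ (-p) - 1 := by rw [mul_sub, mul_one, ← rpow_add hs0, neg_add_cancel, rpow_zero]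

lemma lpSlope_inv_eq_iff {w : ℝ} (hp : 1 < p) (hs : s ∈ Set.Ioo (0 : ℝ) 1) (hw : 0 ≤ w) :
    (lpSlope p s)⁻¹ = w ↔ s = (w ^ (p / (p - 1)) + 1) ^ (-(1 / p)) := by
  have hp0 : 0 < p := by linarith
  have h_conj : p / (p - 1) ≠ 0 := (div_pos hp0 (sub_pos.2 hp)).ne'
  have h_inv : 0 < (lpSlope p s)⁻¹ := inv_pos.2 (lpSlope_pos hp0 hs)
  have h_exp : -(1 / p) = (-p)⁻¹ := by rw [one_div, inv_neg]
  calc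
    (lpSlope p s)⁻¹ = w ↔ (lpSlope p s)⁻¹ ^ (p / (p - 1)) = w ^ (p / (p - 1)) :=
      (rpow_left_inj h_inv.le hw h_conj).symm
    _ ↔ s ^ (-p) = w ^ (p / (p - 1)) + 1 := by
      rw [lpSlope_inv_rpow_conjExponent hp hs, sub_eq_iff_eq_add]
    _ ↔ s = (w ^ (p / (p - 1)) + 1) ^ (-(1 / p)) := by
      rw [h_exp, eq_rpow_inv hs.1.le (by positivity) (neg_ne_zero.2 hp0.ne')]

lemma one_add_lpSlope_rpow_eq_iff {c w : ℝ} (hp : 1 < p) (hc : 0 ≤ c)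
    (hw : w ∈ Set.Ioo (0 : ℝ) 1) (hroot : w ^ p + 1 = c * (1 - w) ^ p)
    (hs : s ∈ Set.Ioo (0 : ℝ) 1) :
    (1 + lpSlope p s ^ p) ^ (1 / p) = c ^ (1 / p) * (lpSlope p s - 1) ↔
      s = (w ^ (p / (p - 1)) + 1) ^ (-(1 / p)) :=
  have hp0 : 0 < p := zero_lt_one.trans hp
  (one_add_rpow_rpow_eq_iff_inv_eq hp0 hc (lpSlope_pos hp0 hs) hw hroot).trans
    (lpSlope_inv_eq_iff hp hs hw.1.le)

end Slope

/-- The `ℓ_p` length of the arc of the `ℓ_p` unit circle `y = (1 - z ^ p) ^ (1 / p)` between the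
abscissae `a` and `s`, signed by orientation and meaningful for `a` and `s` in `(0, 1)`. -/
noncomputable def lpArcLength (p a s : ℝ) : ℝ :=
  ∫ z in a..s, (z ^ (p ^ 2 - p) * (1 - z ^ p) ^ (1 - p) + 1) ^ (1 / p)

section Derivative

variable {p s : ℝ}

lemma hasDerivAt_one_sub_rpow_rpow (hp : 0 < p) (hs : s ∈ Set.Ioo (0 : ℝ) 1) :
    HasDerivAt (fun t : ℝ => (1 - t ^ p) ^ (1 / p)) (-lpSlope p s) s := by
  have h_exp : 1 / p - 1 = (1 - p) / p := by field_simp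
  refine (((hasDerivAt_rpow_const (p := p) (Or.inl hs.1.ne')).const_sub 1).rpow_const
    (p := 1 / p) (Or.inl (one_sub_rpow_pos hp hs).ne')).congr_deriv ?_
  rw [h_exp, lpSlope]
  field_simp

lemma continuousOn_rpow_mul_one_sub_rpow (hp : 0 < p) (a b : ℝ) :
    ContinuousOn (fun z : ℝ => z ^ a * (1 - z ^ p) ^ b) (Set.Ioo 0 1) := by
  have h_rpow (r : ℝ) : ContinuousOn (fun z : ℝ => z ^ r) (Set.Ioo 0 1) :=
    continuousOn_id.rpow_const fun z hz => Or.inl hz.1.ne'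
  exact (h_rpow a).mul ((continuousOn_const.sub (h_rpow p)).rpow_const fun z hz =>
    Or.inl (one_sub_rpow_pos hp hz).ne')

lemma hasDerivAt_integral_of_continuousOn {E : Type*} [NormedAddCommGroup E] [NormedSpace ℝ E]
    [CompleteSpace E] {f : ℝ → E} {u : Set ℝ} {a b : ℝ} (hu : IsOpen u) (hu' : u.OrdConnected)
    (hf : ContinuousOn f u) (ha : a ∈ u) (hb : b ∈ u) :
    HasDerivAt (fun t => ∫ z in a..t, f z) (f b) b :=
  integral_hasDerivAt_right (hf.mono (hu'.uIcc_subset ha hb)).intervalIntegrable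
    (hf.stronglyMeasurableAtFilter hu b hb) (hf.continuousAt (hu.mem_nhds hb))

lemma hasDerivAt_lpArcLength {a : ℝ} (hp : 0 < p) (ha : a ∈ Set.Ioo (0 : ℝ) 1)
    (hs : s ∈ Set.Ioo (0 : ℝ) 1) :
    HasDerivAt (lpArcLength p a) ((1 + lpSlope p s ^ p) ^ (1 / p)) s := by
  have h_cont : ContinuousOn
      (fun z : ℝ => (z ^ (p ^ 2 - p) * (1 - z ^ p) ^ (1 - p) + 1) ^ (1 / p)) (Set.Ioo 0 1) :=
    ((continuousOn_rpow_mul_one_sub_rpow hp _ _).add continuousOn_const).rpow_const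
      fun _ _ => Or.inr (by positivity)
  refine (hasDerivAt_integral_of_continuousOn isOpen_Ioo Set.ordConnected_Ioo h_cont ha
    hs).congr_deriv ?_
  rw [lpSlope_rpow_self hp hs, add_comm, show p * (p - 1) = p ^ 2 - p by ring]

lemma deriv_const_add_lpArcLength_add {a : ℝ} (hp : 0 < p) (ha : a ∈ Set.Ioo (0 : ℝ) 1)
    (hs : s ∈ Set.Ioo (0 : ℝ) 1) (c k : ℝ) :
    deriv (fun t => c + lpArcLength p a t + k * ((1 - t ^ p) ^ (1 / p) + t)) s
      = (1 + lpSlope p s ^ p) ^ (1 / p) - k * (lpSlope p s - 1) := by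
  have h_sum := ((hasDerivAt_lpArcLength hp ha hs).const_add c).add
    (((hasDerivAt_one_sub_rpow_rpow hp hs).add (hasDerivAt_id' s)).const_mul k)
  refine h_sum.deriv.trans ?_
  ring

end Derivative

theorem stmt_9_general (p : ℝ) (hp : 1 < p) (w : ℝ) (hw : w ∈ Set.Ioo (0 : ℝ) 1)
    (hroot : w ^ p + 1 = 2 * (1 - w) ^ p) :
    let sp : ℝ := (w ^ (p / (p - 1)) + 1) ^ (-(1 / p))
    let f₁ : ℝ → ℝ := fun s =>
      1 + piP p / 2
        + (∫ z in ((2 : ℝ) ^ (-(1 / p)))..s,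
            (z ^ (p ^ 2 - p) * (1 - z ^ p) ^ (1 - p) + 1) ^ (1 / p))
        + (2 : ℝ) ^ (1 / p) * ((1 - s ^ p) ^ (1 / p) + s)
    sp ∈ Set.Ioo ((2 : ℝ) ^ (-(1 / p))) 1 ∧
    (∀ s ∈ Set.Ioo (0 : ℝ) 1, deriv f₁ s = 0 ↔ s = sp) ∧
    (∀ s ∈ Set.Ioo (0 : ℝ) 1,
      ((1 + s ^ (p * (p - 1)) * (1 - s ^ p) ^ (1 - p)) ^ (1 / p)
        = (2 : ℝ) ^ (1 / p) * (s ^ (p - 1) * (1 - s ^ p) ^ ((1 - p) / p) - 1)) ↔ s = sp) := by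
  intro sp f₁
  have hp0 : 0 < p := by linarith
  have h_base : (2 : ℝ) ^ (-(1 / p)) ∈ Set.Ioo (0 : ℝ) 1 :=
    ⟨by positivity, rpow_lt_one_of_one_lt_of_neg one_lt_two (neg_neg_of_pos (by positivity))⟩
  have h_iff (s : ℝ) (hs : s ∈ Set.Ioo (0 : ℝ) 1) :
      (1 + lpSlope p s ^ p) ^ (1 / p) = 2 ^ (1 / p) * (lpSlope p s - 1) ↔ s = sp :=
    one_add_lpSlope_rpow_eq_iff hp zero_le_two hw hroot hs
  refine ⟨rpow_add_one_rpow_neg_mem_Ioo (div_pos hp0 (sub_pos.2 hp)) (one_div_pos.2 hp0) hw,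
    fun s hs => ?_, fun s hs => ?_⟩
  · have h_deriv : deriv f₁ s = (1 + lpSlope p s ^ p) ^ (1 / p) - 2 ^ (1 / p) * (lpSlope p s - 1) :=
      deriv_const_add_lpArcLength_add hp0 h_base hs _ _
    rw [h_deriv, sub_eq_zero, h_iff s hs]
  · rw [← h_iff s hs, lpSlope_rpow_self hp0 hs, lpSlope]

/-- For `p ∈ [2,∞)`, with `w_p ∈ (0,1)` the root of `w^p + 1 = 2(1−w)^p` and
`s_p = (w_p^{p/(p−1)} + 1)^{−1/p}`, one has `s_p ∈ (2^{−1/p}, 1)` and `s_p` is the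
unique critical point of `f₁` in `(2^{−1/p}, 1)`; equivalently, `s_p` is the unique
solution there of `(1 + s^{p(p−1)}(1−s^p)^{1−p})^{1/p} = 2^{1/p}(s^{p−1}(1−s^p)^{(1−p)/p} − 1)`. -/
theorem stmt_9 (p : ℝ) (hp : 2 ≤ p) (w : ℝ) (hw : w ∈ Set.Ioo (0 : ℝ) 1)
    (hroot : w ^ p + 1 = 2 * (1 - w) ^ p) :
    let sp : ℝ := (w ^ (p / (p - 1)) + 1) ^ (-(1 / p))
    let f₁ : ℝ → ℝ := fun s =>
      1 + piP p / 2
        + (∫ z in ((2 : ℝ) ^ (-(1 / p)))..s,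
            (z ^ (p ^ 2 - p) * (1 - z ^ p) ^ (1 - p) + 1) ^ (1 / p))
        + (2 : ℝ) ^ (1 / p) * ((1 - s ^ p) ^ (1 / p) + s)
    sp ∈ Set.Ioo ((2 : ℝ) ^ (-(1 / p))) 1 ∧
    (∀ s ∈ Set.Ioo ((2 : ℝ) ^ (-(1 / p))) 1, deriv f₁ s = 0 ↔ s = sp) ∧
    (∀ s ∈ Set.Ioo ((2 : ℝ) ^ (-(1 / p))) 1,
      ((1 + s ^ (p * (p - 1)) * (1 - s ^ p) ^ (1 - p)) ^ (1 / p)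
        = (2 : ℝ) ^ (1 / p) * (s ^ (p - 1) * (1 - s ^ p) ^ ((1 - p) / p) - 1)) ↔ s = sp) := by
  obtain ⟨h_mem, h_deriv, h_eq⟩ := stmt_9_general p (by linarith) w hw hroot
  have h_sub : Set.Ioo ((2 : ℝ) ^ (-(1 / p))) 1 ⊆ Set.Ioo 0 1 :=
    Set.Ioo_subset_Ioo_left (by positivity)
  exact ⟨h_mem, fun s hs => h_deriv s (h_sub hs), fun s hs => h_eq s (h_sub hs)⟩
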